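/- arXiv:1704.08096 — 7 statements merged into one kernel-verified Lean document; each statement's English description precedes it below -/
import Mathlib

section
/- Let X and Y be Polish spaces, let d_X be a compatible complete metric on X, and let f : X → Y be a function of Baire class 1. Then Player II has a winning strategy in the game G_f; that is, there exists a function τ assigning to every finite sequence (x_0, …, x_n) of points of X a point of Y such that for every sequence (x_n)_{n∈ℕ} in X with d_X(x_n, x_{n+1}) ≤ 2^{-n} for all n (so that (x_n) converges to some x ∈ X by completeness), the sequence y_n = τ(x_0, …, x_n) converges to f(x). -/
/-!
Player II can win by looking only at the current move `x_n` and the stage `n`, since the rule forces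
the limit `x` to lie in the closed ball of radius `2 * 2⁻ⁿ` around `x_n`.

Fix `ε > 0`. As `Y` is separable and `f` is of Baire class 1, `X` is covered by countably many
closed sets `C i` such that `f` maps `C i` into the `ε`-ball around some point `y i`
(`exists_closed_cover`). At stage `n`, let `i` be the least index for which `C i` meets the ball
around `x_n`. A closed set containing `x` meets all these balls, and one not containing `x` misses
all but finitely many of them, so `i` stabilizes at the least index with `x ∈ C i`. Hence `y i` is
eventually within `ε` of `f x` (`exists_approx`).

Taking `ε = 2⁻ᵐ` for all `m` yields at each stage a sequence of guesses, the `m`-th of which is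
eventually `2⁻ᵐ`-close to `f x`, though not uniformly in `m`. Player II answers with the guess of the
largest precision `m ≤ n` that is consistent with all coarser guesses (`tendsto_bestGuess`).
-/

open Filter Topology

/-- A set is Fσ if it is a countable union of closed sets. -/
def IsFsigma {X : Type*} [TopologicalSpace X] (s : Set X) : Prop :=
  ∃ C : ℕ → Set X, (∀ n, IsClosed (C n)) ∧ s = ⋃ n, C n

/-- A function is of Baire class 1 if preimages of open sets are Fσ. -/
def BaireClassOne {X Y : Type*} [TopologicalSpace X] [TopologicalSpace Y]
    (f : X → Y) : Prop :=
  ∀ U : Set Y, IsOpen U → IsFsigma (f ⁻¹' U)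

/-- The `m`-th guess, allowed an error `(1 / 2) ^ m`, is consistent with all earlier guesses. -/
def GuessConsistent {Y : Type*} [MetricSpace Y] (b : ℕ → Y) (m : ℕ) : Prop :=
  ∀ j ≤ m, dist (b j) (b m) ≤ (1 / 2 : ℝ) ^ j + (1 / 2 : ℝ) ^ m

open Classical in
/-- The most precise guess among `b 0, …, b n` that is consistent with all coarser ones. -/
noncomputable def bestGuess {Y : Type*} [MetricSpace Y] (b : ℕ → Y) (n : ℕ) : Y :=
  b (Nat.findGreatest (GuessConsistent b) n)

theorem tendsto_bestGuess {Y : Type*} [MetricSpace Y] (b : ℕ → ℕ → Y) (y : Y)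
    (hb : ∀ m, ∀ᶠ n in atTop, dist (b n m) y < (1 / 2 : ℝ) ^ m) :
    Tendsto (fun n => bestGuess (b n) n) atTop (𝓝 y) := by
  classical
  rw [Metric.tendsto_atTop']
  intro ε hε
  obtain ⟨M, hM⟩ := exists_pow_lt_of_lt_one (show 0 < ε / 3 by positivity)
    (show (1 / 2 : ℝ) < 1 by norm_num)
  have hall : ∀ᶠ n in atTop, ∀ m ∈ Set.Iic M, dist (b n m) y < (1 / 2 : ℝ) ^ m :=
    (Set.finite_Iic M).eventually_all.2 fun m _ => hb m
  obtain ⟨N, hN⟩ := eventually_atTop.1 (hall.and (eventually_ge_atTop M))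
  refine ⟨N, fun n hn => ?_⟩
  obtain ⟨h1, hMn⟩ := hN n hn.le
  have hP : GuessConsistent (b n) M := fun j hj => by
    have := dist_triangle_right (b n j) (b n M) y
    linarith [h1 j hj, h1 M (Set.mem_Iic.2 le_rfl)]
  have hg : M ≤ Nat.findGreatest (GuessConsistent (b n)) n := Nat.le_findGreatest hMn hP
  have hc := Nat.findGreatest_spec hMn hP M hg
  have hpow : (1 / 2 : ℝ) ^ Nat.findGreatest (GuessConsistent (b n)) n ≤ (1 / 2 : ℝ) ^ M :=
    pow_le_pow_of_le_one (by norm_num) (by norm_num) hg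
  have ht := dist_triangle_left (bestGuess (b n) n) y (b n M)
  have h2 := h1 M (Set.mem_Iic.2 le_rfl)
  unfold bestGuess at ht ⊢
  linarith

theorem exists_closed_cover {X Y : Type*} [TopologicalSpace X] [MetricSpace Y]
    [TopologicalSpace.SeparableSpace Y] [Nonempty Y] (f : X → Y) (hf : BaireClassOne f)
    {ε : ℝ} (hε : 0 < ε) :
    ∃ (C : ℕ → Set X) (y : ℕ → Y), (∀ i, IsClosed (C i)) ∧ (∀ x, ∃ i, x ∈ C i) ∧
      ∀ i, ∀ x ∈ C i, dist (y i) (f x) < ε := by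
  let d := TopologicalSpace.denseSeq Y
  choose C hC hCU using fun k => hf (Metric.ball (d k) ε) Metric.isOpen_ball
  refine ⟨fun i => C i.unpair.1 i.unpair.2, fun i => d i.unpair.1, fun i => hC _ _,
    fun x => ?_, fun i x hx => ?_⟩
  · obtain ⟨k, hk⟩ := (TopologicalSpace.denseRange_denseSeq Y).exists_dist_lt (f x) hε
    have hx : x ∈ f ⁻¹' Metric.ball (d k) ε := hk
    rw [hCU k] at hx
    obtain ⟨l, hl⟩ := Set.mem_iUnion.1 hx
    exact ⟨Nat.pair k l, by simpa using hl⟩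
  · have h : x ∈ f ⁻¹' Metric.ball (d i.unpair.1) ε := by
      rw [hCU]
      exact Set.mem_iUnion.2 ⟨_, hx⟩
    rw [dist_comm]
    exact h

/-- A strategy winning up to an error `ε`: from the stage and the current move alone it eventually
produces points within `ε` of the value of `f` at the limit. -/
theorem exists_approx {X Y : Type*} [MetricSpace X] [MetricSpace Y]
    [TopologicalSpace.SeparableSpace Y] [Nonempty Y] (f : X → Y) (hf : BaireClassOne f)
    {ε : ℝ} (hε : 0 < ε) :
    ∃ g : ℕ → X → Y, ∀ (xs : ℕ → X) (x : X), (∀ n, dist (xs n) x ≤ 2 * (1 / 2 : ℝ) ^ n) →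
      ∀ᶠ n in atTop, dist (g n (xs n)) (f x) < ε := by
  classical
  obtain ⟨C, y, hC, hcov, hy⟩ := exists_closed_cover f hf hε
  -- `z ∈ C i` for some `i`, so the infimum below is never that of the empty set.
  refine ⟨fun n z => y (sInf {i | ∃ c ∈ C i, dist z c ≤ 2 * (1 / 2 : ℝ) ^ n}),
    fun xs x hx => ?_⟩
  have hr : Tendsto (fun n : ℕ => 2 * (1 / 2 : ℝ) ^ n) atTop (𝓝 0) := by
    simpa using (tendsto_pow_atTop_nhds_zero_of_lt_one (r := (1 / 2 : ℝ))
      (by norm_num) (by norm_num)).const_mul 2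
  have hmiss : ∀ i ∈ Set.Iio (Nat.find (hcov x)),
      ∀ᶠ n in atTop, ¬ ∃ c ∈ C i, dist (xs n) c ≤ 2 * (1 / 2 : ℝ) ^ n := by
    intro i hi
    have hxi : x ∈ (C i)ᶜ := Nat.find_min (hcov x) hi
    obtain ⟨δ, hδ, hball⟩ := Metric.isOpen_iff.1 (hC i).isOpen_compl x hxi
    filter_upwards [hr.eventually_lt_const (half_pos hδ)] with n hn
    rintro ⟨c, hc, hd⟩
    refine hball (Metric.mem_ball.2 ?_) hc
    have := dist_triangle_left c x (xs n)
    linarith [hx n]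
  filter_upwards [(Set.finite_Iio _).eventually_all.2 hmiss] with n hn
  have heq : sInf {i | ∃ c ∈ C i, dist (xs n) c ≤ 2 * (1 / 2 : ℝ) ^ n} = Nat.find (hcov x) := by
    have hmem : Nat.find (hcov x) ∈ {i | ∃ c ∈ C i, dist (xs n) c ≤ 2 * (1 / 2 : ℝ) ^ n} :=
      ⟨x, Nat.find_spec (hcov x), hx n⟩
    refine le_antisymm (Nat.sInf_le hmem) (not_lt.1 fun hlt => hn _ hlt ?_)
    exact Nat.sInf_mem ⟨_, hmem⟩
  simp only [heq]
  exact hy _ x (Nat.find_spec (hcov x))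

/-- If `f : X → Y` is of Baire class 1 between Polish spaces (`X` equipped with a
compatible complete metric), then Player II has a winning strategy in the game `G_f`:
there is a function `τ` assigning to each finite sequence `(x_0, …, x_n)` of points of `X`
a point of `Y`, such that for every sequence `(x_n)` with `dist (x_n) (x_{n+1}) ≤ 2⁻ⁿ`,
the sequence `x_n` converges to some `x` and `y_n = τ (x_0, …, x_n)` converges to `f x`. -/
theorem playerII_winning_of_baireClassOne
    {X Y : Type*} [MetricSpace X] [CompleteSpace X] [TopologicalSpace.SeparableSpace X]
    [MetricSpace Y] [CompleteSpace Y] [TopologicalSpace.SeparableSpace Y]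
    (f : X → Y) (hf : BaireClassOne f) :
    ∃ τ : (n : ℕ) → (Fin (n + 1) → X) → Y,
      ∀ xs : ℕ → X, (∀ n, dist (xs n) (xs (n + 1)) ≤ (1 / 2 : ℝ) ^ n) →
        ∃ x : X, Tendsto xs atTop (𝓝 x) ∧
          Tendsto (fun n => τ n (fun i : Fin (n + 1) => xs i)) atTop (𝓝 (f x)) := by
  rcases isEmpty_or_nonempty X with hX | ⟨⟨x₀⟩⟩
  · exact ⟨fun n s => isEmptyElim (s 0), fun xs => isEmptyElim (xs 0)⟩
  have : Nonempty Y := ⟨f x₀⟩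
  choose g hg using fun m : ℕ => exists_approx f hf (show (0 : ℝ) < (1 / 2) ^ m by positivity)
  refine ⟨fun n s => bestGuess (fun m => g m n (s (Fin.last n))) n, fun xs hxs => ?_⟩
  have hxs' : ∀ n, dist (xs n) (xs (n + 1)) ≤ 1 * (1 / 2 : ℝ) ^ n := by simpa using hxs
  obtain ⟨x, hx⟩ := cauchySeq_tendsto_of_complete
    (cauchySeq_of_le_geometric (1 / 2 : ℝ) 1 (by norm_num) hxs')
  refine ⟨x, hx, tendsto_bestGuess (fun n m => g m n (xs n)) (f x) fun m => hg m xs x fun n => ?_⟩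
  have := dist_le_of_le_geometric_of_tendsto (1 / 2 : ℝ) 1 (by norm_num) hxs' hx n
  calc dist (xs n) x ≤ 1 * (1 / 2 : ℝ) ^ n / (1 - 1 / 2) := this
    _ = 2 * (1 / 2 : ℝ) ^ n := by ring
end

section
/- Let X and Y be Polish spaces, let d_X be a compatible complete metric on X, and let f : X → Y be a function that is not of Baire class 1. Then Player I has a winning strategy in the game G_f; that is, there exists a function σ assigning to every finite sequence (y_0, …, y_{n−1}) of points of Y a point x_n ∈ X, such that along every run of the game in which Player I's moves are produced by σ, the rule d_X(x_n, x_{n+1}) ≤ 2^{-n} is always satisfied, and for every sequence (y_n)_{n∈ℕ} of moves of Player II, the sequence (y_n) does not converge to f(x), where x is the limit of Player I's moves (x_n). -/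
/-!
The proof rests on one dichotomy. Call `C ⊆ X` *uniformly oscillating* (with constant `ε > 0`) if
every point `x ∈ C` has points `x' ∈ C` arbitrarily near to it with `dist (f x) (f x') ≥ ε`.

* If no nonempty set is uniformly oscillating, then `f` is of Baire class 1
  (`baireClassOne_of_forall_set`). For fixed `ε`, let `W` be the largest open set that is covered
  by countably many closed sets whose `f`-images have pairwise distances `< 2 * ε`; it exists by
  the Lindelöf property. If `Wᶜ` were nonempty, some point of it would have a closed ball `B` such
  that `f` varies by less than `2 * ε` on `B ∩ Wᶜ`, and adding this one closed set would enlarge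
  `W`. So `W = univ`, and letting `ε → 0` along a sequence, `f ⁻¹' V` is the union of those closed
  sets from these covers that it contains.
* If `C` is nonempty and uniformly oscillating, Player I wins (`exists_strategy`): he stays at his
  current point `x ∈ C` until Player II plays within `ε / 3` of `f x`, and then jumps to a close
  `x' ∈ C` with `dist (f x) (f x') ≥ ε`. If he jumps infinitely often then `(y_n)` oscillates and
  diverges; otherwise he ends up staying at some `x`, while `y_n` stays away from `f x`.
-/


open Filter Topology

/-- For fixed `ε`, if every nonempty set `C` has a point near which `f` restricted to `C` varies by
less than `ε`, then `X` is a countable union of closed sets on which `f` varies by less than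
`2 * ε`. -/
lemma exists_countable_closed_cover {X Y : Type*} [MetricSpace X]
    [TopologicalSpace.SeparableSpace X] [MetricSpace Y] (f : X → Y) (ε : ℝ)
    (h : ∀ C : Set X, C.Nonempty →
      ∃ x ∈ C, ∃ r > 0, ∀ x' ∈ C, dist x x' < r → dist (f x) (f x') < ε) :
    ∃ 𝒜 : Set (Set X), 𝒜.Countable ∧
      (∀ A ∈ 𝒜, IsClosed A ∧ ∀ a ∈ A, ∀ b ∈ A, dist (f a) (f b) < 2 * ε) ∧
      ∀ x, ∃ A ∈ 𝒜, x ∈ A := by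
  have : SecondCountableTopology X := UniformSpace.secondCountable_of_separable X
  let Good : Set X → Prop := fun U => ∃ 𝒜 : Set (Set X), 𝒜.Countable ∧
      (∀ A ∈ 𝒜, IsClosed A ∧ ∀ a ∈ A, ∀ b ∈ A, dist (f a) (f b) < 2 * ε) ∧
      ∀ x ∈ U, ∃ A ∈ 𝒜, x ∈ A
  obtain ⟨T, hTc, hTsub, hTeq⟩ := TopologicalSpace.isOpen_sUnion_countable
    {U : Set X | IsOpen U ∧ Good U} (fun U hU => hU.1)
  set W := ⋃₀ {U : Set X | IsOpen U ∧ Good U}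
  have hWgood : Good W := by
    choose! F hFc hF hFcov using fun U (hU : U ∈ T) => (hTsub hU).2
    refine ⟨⋃ U ∈ T, F U, hTc.biUnion hFc, ?_, ?_⟩
    · intro A hA
      simp only [Set.mem_iUnion] at hA
      obtain ⟨U, hU, hA⟩ := hA
      exact hF U hU A hA
    · intro x hx
      rw [← hTeq] at hx
      obtain ⟨U, hU, hxU⟩ := hx
      obtain ⟨A, hA, hxA⟩ := hFcov U hU x hxU
      exact ⟨A, Set.mem_biUnion hU hA, hxA⟩
  obtain ⟨𝒜, h𝒜c, h𝒜, h𝒜cov⟩ := hWgood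
  have hWopen : IsOpen W := isOpen_sUnion fun U hU => hU.1
  have hWuniv : W = Set.univ := by
    by_contra hne
    obtain ⟨x, hxC, r, hr, hxr⟩ := h Wᶜ (Set.nonempty_compl.2 hne)
    have hball : Metric.ball x (r / 2) ⊆ W := by
      refine Set.subset_sUnion_of_mem ⟨Metric.isOpen_ball,
        insert (Metric.closedBall x (r / 2) ∩ Wᶜ) 𝒜, h𝒜c.insert _, ?_, ?_⟩
      · rintro A (rfl | hA)
        · refine ⟨Metric.isClosed_closedBall.inter hWopen.isClosed_compl, ?_⟩
          rintro a ⟨ha, haW⟩ b ⟨hb, hbW⟩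
          rw [Metric.mem_closedBall'] at ha hb
          have h1 := hxr a haW (by linarith)
          have h2 := hxr b hbW (by linarith)
          have h3 := dist_triangle_left (f a) (f b) (f x)
          linarith
        · exact h𝒜 A hA
      · intro z hz
        by_cases hzW : z ∈ W
        · obtain ⟨A, hA, hzA⟩ := h𝒜cov z hzW
          exact ⟨A, Or.inr hA, hzA⟩
        · exact ⟨_, Or.inl rfl, Metric.ball_subset_closedBall hz, hzW⟩
    exact hxC (hball (Metric.mem_ball_self (by positivity)))
  exact ⟨𝒜, h𝒜c, h𝒜, fun x => h𝒜cov x (hWuniv ▸ Set.mem_univ x)⟩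

lemma isFsigma_of_countable {X : Type*} [TopologicalSpace X] {𝒜 : Set (Set X)}
    (hc : 𝒜.Countable) (h : ∀ A ∈ 𝒜, IsClosed A) : IsFsigma (⋃₀ 𝒜) := by
  -- Adding `∅` makes the family nonempty, so that it can be enumerated by `ℕ`.
  obtain ⟨C, hC⟩ := (hc.insert ∅).exists_eq_range (Set.insert_nonempty ∅ 𝒜)
  refine ⟨C, fun n => ?_, ?_⟩
  · have hn : C n ∈ insert ∅ 𝒜 := hC ▸ Set.mem_range_self n
    rcases hn with hn | hn
    · rw [hn]
      exact isClosed_empty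
    · exact h _ hn
  · rw [← Set.sUnion_range, ← hC, Set.sUnion_insert, Set.empty_union]

/-- A function with no nonempty uniformly oscillating set is of Baire class 1. -/
lemma baireClassOne_of_forall_set {X Y : Type*} [MetricSpace X]
    [TopologicalSpace.SeparableSpace X] [MetricSpace Y] (f : X → Y)
    (h : ∀ ε > 0, ∀ C : Set X, C.Nonempty →
      ∃ x ∈ C, ∃ r > 0, ∀ x' ∈ C, dist x x' < r → dist (f x) (f x') < ε) :
    BaireClassOne f := by
  intro V hV
  choose 𝒜 h𝒜c h𝒜 h𝒜cov using fun n : ℕ =>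
    exists_countable_closed_cover f ((1 / 2 : ℝ) ^ n) (h _ (by positivity))
  have key : f ⁻¹' V = ⋃₀ {A | A ∈ ⋃ n, 𝒜 n ∧ A ⊆ f ⁻¹' V} := by
    apply Set.Subset.antisymm
    · intro x hx
      obtain ⟨δ, hδ, hball⟩ := Metric.isOpen_iff.1 hV (f x) hx
      obtain ⟨n, hn⟩ := exists_pow_lt_of_lt_one (half_pos hδ) (by norm_num : (1 / 2 : ℝ) < 1)
      obtain ⟨A, hA, hxA⟩ := h𝒜cov n x
      refine ⟨A, ⟨Set.mem_iUnion.2 ⟨n, hA⟩, fun z hz => hball ?_⟩, hxA⟩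
      have := (h𝒜 n A hA).2 z hz x hxA
      rw [Metric.mem_ball]
      linarith
    · exact Set.sUnion_subset fun A hA => hA.2
  rw [key]
  refine isFsigma_of_countable ((Set.countable_iUnion h𝒜c).mono fun A hA => hA.1) ?_
  rintro A ⟨hA, -⟩
  obtain ⟨n, hn⟩ := Set.mem_iUnion.1 hA
  exact (h𝒜 n A hn).1

open Classical in
/-- Player I's strategy on a uniformly oscillating set `C`, given a jump function `next`: stay at
the current point `x` unless Player II's last move is within `δ` of `f x`. -/
noncomputable def oscStrategy {X Y : Type*} [MetricSpace Y] (f : X → Y) {C : Set X} (x₀ : C)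
    (next : ℕ → C → C) (δ : ℝ) : (n : ℕ) → (Fin n → Y) → C
  | 0, _ => x₀
  | n + 1, s =>
    let x := oscStrategy f x₀ next δ n (Fin.init s)
    if dist (s (Fin.last n)) (f x) < δ then next n x else x

/-- Player I wins if there is a nonempty uniformly oscillating set. -/
lemma exists_strategy {X Y : Type*} [MetricSpace X] [CompleteSpace X] [MetricSpace Y]
    (f : X → Y) {ε : ℝ} (hε : 0 < ε) {C : Set X} (hC : C.Nonempty)
    (h : ∀ x ∈ C, ∀ r > 0, ∃ x' ∈ C, dist x x' < r ∧ ε ≤ dist (f x) (f x')) :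
    ∃ σ : (n : ℕ) → (Fin n → Y) → X,
      ∀ ys : ℕ → Y,
        (∀ n, dist (σ n (fun i : Fin n => ys i)) (σ (n + 1) (fun i : Fin (n + 1) => ys i))
          ≤ (1 / 2 : ℝ) ^ n) ∧
        ∃ x : X, Tendsto (fun n => σ n (fun i : Fin n => ys i)) atTop (𝓝 x) ∧
          ¬ Tendsto ys atTop (𝓝 (f x)) := by
  obtain ⟨x₀, hx₀⟩ := hC
  have hnext : ∀ (n : ℕ) (x : C), ∃ x' : C,
      dist (x : X) x' < (1 / 2 : ℝ) ^ n ∧ ε ≤ dist (f x) (f x') := fun n x => by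
    obtain ⟨x', hx', h'⟩ := h x x.2 ((1 / 2 : ℝ) ^ n) (by positivity)
    exact ⟨⟨x', hx'⟩, h'⟩
  choose next hnear hfar using hnext
  refine ⟨fun n s => oscStrategy f ⟨x₀, hx₀⟩ next (ε / 3) n s, fun ys => ?_⟩
  set p : ℕ → C := fun n => oscStrategy f ⟨x₀, hx₀⟩ next (ε / 3) n (fun i : Fin n => ys i)
  have hjump : ∀ n, dist (ys n) (f (p n)) < ε / 3 → p (n + 1) = next n (p n) :=
    fun n hn => if_pos hn
  have hstay : ∀ n, ¬ dist (ys n) (f (p n)) < ε / 3 → p (n + 1) = p n :=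
    fun n hn => if_neg hn
  change (∀ n, dist (p n : X) (p (n + 1)) ≤ (1 / 2 : ℝ) ^ n) ∧
    ∃ x : X, Tendsto (fun n => (p n : X)) atTop (𝓝 x) ∧ ¬ Tendsto ys atTop (𝓝 (f x))
  have hstep : ∀ n, dist (p n : X) (p (n + 1)) ≤ (1 / 2 : ℝ) ^ n := fun n => by
    by_cases hn : dist (ys n) (f (p n)) < ε / 3
    · rw [hjump n hn]
      exact (hnear n (p n)).le
    · rw [hstay n hn, dist_self]
      positivity
  refine ⟨hstep, ?_⟩
  obtain ⟨x, hx⟩ := cauchySeq_tendsto_of_complete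
    (cauchySeq_of_le_geometric (1 / 2 : ℝ) 1 (by norm_num) fun n => by
      rw [one_mul]
      exact hstep n)
  refine ⟨x, hx, fun hys => ?_⟩
  obtain ⟨N, hN⟩ := Metric.tendsto_atTop.1 hys (ε / 6) (by positivity)
  have hclose : ∀ n ≥ N, dist (ys n) (f (p n)) < ε / 3 → dist (f (p n)) (f x) < ε / 2 :=
    fun n hn hj => by
      have := dist_triangle_left (f (p n)) (f x) (ys n)
      linarith [hN n hn]
  -- After one late jump, `f (p n)` is too far from the limit of `ys` for another jump to occur.
  have hev : ∃ M, ∀ n ≥ M, ¬ dist (ys n) (f (p n)) < ε / 3 := by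
    by_cases hex : ∃ n ≥ N, dist (ys n) (f (p n)) < ε / 3
    · obtain ⟨n, hn, hj⟩ := hex
      have hinv : ∀ k ≥ n + 1, ε / 2 ≤ dist (f (p k)) (f x) := by
        intro k hk
        induction k, hk using Nat.le_induction with
        | base =>
          rw [hjump n hj]
          have h1 := hclose n hn hj
          have h2 := hfar n (p n)
          have h3 := dist_triangle_right (f (p n)) (f (next n (p n))) (f x)
          linarith
        | succ k hk ih =>
          rw [hstay k fun hj' => by linarith [hclose k (by omega) hj']]
          exact ih
      exact ⟨n + 1, fun k hk hj' => by linarith [hinv k hk, hclose k (by omega) hj']⟩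
    · push Not at hex
      exact ⟨N, fun n hn => not_lt.2 (hex n hn)⟩
  obtain ⟨M, hM⟩ := hev
  have hconst : ∀ n ≥ M, p n = p M := by
    intro n hn
    induction n, hn using Nat.le_induction with
    | base => rfl
    | succ n hn ih => rw [hstay n (hM n hn), ih]
  have hxM : x = p M := tendsto_nhds_unique hx
    (tendsto_atTop_of_eventually_const fun n hn => congrArg Subtype.val (hconst n hn))
  have h1 := hN (max M N) (le_max_right _ _)
  have h2 := hM (max M N) (le_max_left _ _)
  rw [hconst _ (le_max_left _ _), ← hxM] at h2
  linarith

/-- If `f : X → Y` between Polish spaces (`X` equipped with a compatible complete metric)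
is not of Baire class 1, then Player I has a winning strategy in the game `G_f`:
there is a function `σ` assigning to each finite sequence `(y_0, …, y_{n-1})` of points
of `Y` a point `x_n ∈ X` such that, in every run where Player I follows `σ`, the rule
`dist (x_n) (x_{n+1}) ≤ 2⁻ⁿ` is satisfied, and the moves `(y_n)` of Player II do not
converge to `f x`, where `x` is the limit of `(x_n)`. -/
theorem playerI_winning_of_not_baireClassOne
    {X Y : Type*} [MetricSpace X] [CompleteSpace X] [TopologicalSpace.SeparableSpace X]
    [MetricSpace Y] [CompleteSpace Y] [TopologicalSpace.SeparableSpace Y]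
    (f : X → Y) (hf : ¬ BaireClassOne f) :
    ∃ σ : (n : ℕ) → (Fin n → Y) → X,
      ∀ ys : ℕ → Y,
        (∀ n, dist (σ n (fun i : Fin n => ys i)) (σ (n + 1) (fun i : Fin (n + 1) => ys i))
          ≤ (1 / 2 : ℝ) ^ n) ∧
        ∃ x : X, Tendsto (fun n => σ n (fun i : Fin n => ys i)) atTop (𝓝 x) ∧
          ¬ Tendsto ys atTop (𝓝 (f x)) := by
  by_contra hno
  refine hf (baireClassOne_of_forall_set f fun ε hε C hC => ?_)
  by_contra hosc
  push Not at hosc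
  exact hno (exists_strategy f hε hC hosc)
end

section
/- Let f : ℝ → ℝ be defined by f(0) = 1 and f(x) = 0 for x ≠ 0. In the modified game in which at stage n Player I plays an arbitrary x_n ∈ ℝ (with no distance restriction) and Player II then plays y_n ∈ ℝ, and Player II wins a run iff the sequence (x_n) diverges, or (x_n) converges to some x and (y_n) converges to f(x), Player I has a winning strategy, even though f is of Baire class 1. -/
/-!
Every preimage under `f` is one of `∅`, `{0}`, `{0}ᶜ`, `univ`, hence open or closed, and both kinds
of set are Fσ in `ℝ`. This gives Baire class 1.

Player I plays `x_n = 1 / (k + 1)`, where `k` is the number of earlier answers `y_i < 1/2`: he moves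
towards `0` when the last answer was below `1/2`, and stays put otherwise. If there are infinitely
many answers below `1/2`, then `x_n → 0`, while `y_n` does not tend to `f 0 = 1`. Otherwise `x_n` is
eventually constant and nonzero, while `y_n ≥ 1/2` eventually, so `y_n` does not tend to `0`.
-/

open Filter Topology

theorem IsClosed.isFsigma {X : Type*} [TopologicalSpace X] {s : Set X} (hs : IsClosed s) :
    IsFsigma s :=
  ⟨fun _ => s, fun _ => hs, (Set.iUnion_const s).symm⟩

theorem isFsigma_of_isOpen {s : Set ℝ} (hs : IsOpen s) : IsFsigma s := by
  obtain ⟨F, hF, -, hU, -⟩ := hs.exists_iUnion_isClosed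
  exact ⟨F, hF, hU.symm⟩

theorem baireClassOne_indicator_zero (f : ℝ → ℝ) (hf : ∀ x : ℝ, f x = if x = 0 then 1 else 0) :
    BaireClassOne f := by
  intro U _
  by_cases h0 : (0 : ℝ) ∈ U
  · by_cases h1 : (1 : ℝ) ∈ U
    · have : f ⁻¹' U = Set.univ := by
        ext x; by_cases hx : x = 0 <;> simp [hf, hx, h0, h1]
      rw [this]
      exact isClosed_univ.isFsigma
    · have : f ⁻¹' U = {0}ᶜ := by
        ext x; by_cases hx : x = 0 <;> simp [hf, hx, h0, h1]
      rw [this]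
      exact isFsigma_of_isOpen isOpen_compl_singleton
  · by_cases h1 : (1 : ℝ) ∈ U
    · have : f ⁻¹' U = {0} := by
        ext x; by_cases hx : x = 0 <;> simp [hf, hx, h0, h1]
      rw [this]
      exact isClosed_singleton.isFsigma
    · have : f ⁻¹' U = ∅ := by
        ext x; by_cases hx : x = 0 <;> simp [hf, hx, h0, h1]
      rw [this]
      exact isClosed_empty.isFsigma

/-- The number of answers below `1/2` among the first `n`. -/
noncomputable def lowCount (ys : ℕ → ℝ) (n : ℕ) : ℕ :=
  ∑ i ∈ Finset.range n, if ys i < 1 / 2 then 1 else 0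

theorem lowCount_succ (ys : ℕ → ℝ) (n : ℕ) :
    lowCount ys (n + 1) = lowCount ys n + if ys n < 1 / 2 then 1 else 0 :=
  Finset.sum_range_succ _ _

theorem lowCount_mono (ys : ℕ → ℝ) : Monotone (lowCount ys) :=
  monotone_nat_of_le_succ fun n => by rw [lowCount_succ]; exact Nat.le_add_right _ _

theorem tendsto_lowCount (ys : ℕ → ℝ) (h : ∃ᶠ n in atTop, ys n < 1 / 2) :
    Tendsto (lowCount ys) atTop atTop := by
  refine tendsto_atTop_atTop_of_monotone (lowCount_mono ys) fun b => ?_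
  induction b with
  | zero => exact ⟨0, Nat.zero_le _⟩
  | succ b ih =>
    obtain ⟨a, ha⟩ := ih
    obtain ⟨m, ham, hm⟩ := frequently_atTop.1 h a
    refine ⟨m + 1, ?_⟩
    rw [lowCount_succ, if_pos hm]
    exact Nat.succ_le_succ (ha.trans (lowCount_mono ys ham))

theorem lowCount_eq_of_le (ys : ℕ → ℝ) (N : ℕ) (h : ∀ n ≥ N, ¬ ys n < 1 / 2) (n : ℕ)
    (hn : N ≤ n) : lowCount ys n = lowCount ys N := by
  induction n, hn using Nat.le_induction with
  | base => rfl
  | succ n hn ih => rw [lowCount_succ, if_neg (h n hn), ih, add_zero]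

/-- Let `f : ℝ → ℝ` with `f 0 = 1` and `f x = 0` for `x ≠ 0`. Then `f` is of Baire class 1,
yet in the modified game (Player I plays arbitrary `x_n ∈ ℝ` with no distance restriction,
Player II then plays `y_n ∈ ℝ`; Player II wins iff `(x_n)` diverges, or `x_n → x` and
`y_n → f x`) Player I has a winning strategy: a function `σ` assigning to each finite
sequence `(y_0, …, y_{n-1})` of moves of Player II a point `x_n ∈ ℝ`, such that in every
run where Player I follows `σ`, the sequence `(x_n)` converges to some `x` while `(y_n)`
does not converge to `f x`. -/
theorem playerI_wins_modified_game :
    ∀ f : ℝ → ℝ, (∀ x : ℝ, f x = if x = 0 then 1 else 0) →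
      BaireClassOne f ∧
        ∃ σ : (n : ℕ) → (Fin n → ℝ) → ℝ,
          ∀ ys : ℕ → ℝ,
            ∃ x : ℝ, Tendsto (fun n => σ n (fun i : Fin n => ys i)) atTop (𝓝 x) ∧
              ¬ Tendsto ys atTop (𝓝 (f x)) := by
  intro f hf
  refine ⟨baireClassOne_indicator_zero f hf,
    fun n y => 1 / (((∑ i : Fin n, if y i < 1 / 2 then 1 else 0 : ℕ) : ℝ) + 1), fun ys => ?_⟩
  have hσ : ∀ n : ℕ, (∑ i : Fin n, if ys i < 1 / 2 then 1 else 0 : ℕ) = lowCount ys n :=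
    fun n => Fin.sum_univ_eq_sum_range (fun i => if ys i < 1 / 2 then 1 else 0) n
  simp only [hσ]
  by_cases h : ∃ᶠ n in atTop, ys n < 1 / 2
  · refine ⟨0, tendsto_one_div_add_atTop_nhds_zero_nat.comp (tendsto_lowCount ys h), fun ht => ?_⟩
    rw [hf, if_pos rfl] at ht
    have hev : ∀ᶠ n in atTop, 1 / 2 < ys n := ht.eventually_const_lt (by norm_num)
    exact h (hev.mono fun n hn => hn.le.not_gt)
  · obtain ⟨N, hN⟩ := eventually_atTop.1 (not_frequently.1 h)
    have hne : 1 / ((lowCount ys N : ℝ) + 1) ≠ 0 := by positivity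
    refine ⟨1 / ((lowCount ys N : ℝ) + 1), ?_, fun ht => ?_⟩
    · refine tendsto_const_nhds.congr' ?_
      filter_upwards [eventually_ge_atTop N] with n hn
      rw [lowCount_eq_of_le ys N hN n hn]
    · rw [hf, if_neg hne] at ht
      have hev : ∀ᶠ n in atTop, ys n < 1 / 2 := ht.eventually_lt_const (by norm_num)
      exact h hev.frequently
end

section
/- Let X and Y be metric spaces with metrics d_X and d_Y, let f : X → Y, and let x ∈ X. Let (F_n)_{n∈ℕ} be a decreasing sequence of nonempty closed subsets of X converging to x (i.e., every neighborhood of x contains all but finitely many of the F_n) with o_f(F_n) → 0. Suppose the sequence (y_n)_{n∈ℕ} in Y satisfies, for each n ≥ 1, that either y_n ∈ f(F_n) or y_n = y_{n−1}, with the first alternative occurring for infinitely many n. Then y_n → f(x). -/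
/-!
Each `F n` is closed and meets every neighbourhood of `x`, so `x ∈ F n` for all `n`. Given
`ε > 0`, choose `1/k < ε` and `N` with `oscRank f (F N) < 1/k`. As `1/k` is one of the values
allowed in `oscRank`, the oscillation of `f` restricted to `F N` at `x` is below `1/k`, so some
open `U ∋ x` has `f '' (U ∩ F N)` of diameter below `1/k`. For large `n` we have
`F n ⊆ U ∩ F N`, so from the first sufficiently late index with `y n ∈ f '' F n` onwards, every
term of `y` lies in `f '' (U ∩ F N)`, which also contains `f x`.
-/

open Filter Topology Set
open scoped ENNReal

/-- The oscillation of `f` restricted to `F` at `x`: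
`inf` over open `U ∋ x` of `sup { dist (f x₁) (f x₂) : x₁, x₂ ∈ U ∩ F }`. -/
noncomputable def oscRestrict {X Y : Type*} [TopologicalSpace X] [PseudoEMetricSpace Y]
    (f : X → Y) (F : Set X) (x : X) : ℝ≥0∞ :=
  ⨅ (U : Set X) (_ : IsOpen U ∧ x ∈ U), EMetric.diam (f '' (U ∩ F))

/-- The set `R = {0} ∪ {1/n : n ∈ ℕ, n > 0}`. -/
def oscValues : Set ℝ≥0∞ := {0} ∪ {r | ∃ n : ℕ, 0 < n ∧ r = (n : ℝ≥0∞)⁻¹}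

/-- `o_f(F)`: the largest `r ∈ R` such that some point of `F` has oscillation `≥ r`
(and `0` if `F = ∅`); this maximum is attained, so it equals the supremum. -/
noncomputable def oscRank {X Y : Type*} [TopologicalSpace X] [PseudoEMetricSpace Y]
    (f : X → Y) (F : Set X) : ℝ≥0∞ :=
  sSup {r | r ∈ oscValues ∧ ∃ x ∈ F, r ≤ oscRestrict f F x}

open Classical in
/-- The derivative `D(F)`: the set of points of `F` with oscillation at least `o_f(F)`
if `o_f(F) > 0`, and `∅` if `o_f(F) = 0`. -/
noncomputable def oscDeriv {X Y : Type*} [TopologicalSpace X] [PseudoEMetricSpace Y]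
    (f : X → Y) (F : Set X) : Set X :=
  if oscRank f F = 0 then ∅ else {x ∈ F | oscRank f F ≤ oscRestrict f F x}

/-- Main lemma: if `(F_n)` is a decreasing sequence of nonempty closed sets converging to
`x` (every neighborhood of `x` contains all but finitely many `F_n`) with `o_f(F_n) → 0`,
and `(y_n)` satisfies for each `n ≥ 1` that either `y_n ∈ f(F_n)` or `y_n = y_{n-1}`,
with the first alternative occurring infinitely often, then `y_n → f x`. -/
theorem tendsto_of_oscRank_tendsto_zero
    {X Y : Type*} [MetricSpace X] [MetricSpace Y] (f : X → Y) (x : X)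
    (F : ℕ → Set X) (hclosed : ∀ n, IsClosed (F n)) (hne : ∀ n, (F n).Nonempty)
    (hdec : ∀ n, F (n + 1) ⊆ F n)
    (hconv : ∀ U ∈ 𝓝 x, ∀ᶠ n in Filter.atTop, F n ⊆ U)
    (hosc : Filter.Tendsto (fun n => oscRank f (F n)) Filter.atTop (𝓝 0))
    (y : ℕ → Y)
    (hy : ∀ n : ℕ, y (n + 1) ∈ f '' F (n + 1) ∨ y (n + 1) = y n)
    (hinf : {n : ℕ | y n ∈ f '' F n}.Infinite) :
    Filter.Tendsto y Filter.atTop (𝓝 (f x)) := by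
  have hanti : Antitone F := antitone_nat_of_succ_le hdec
  have hx : ∀ n, x ∈ F n := fun n => by
    rw [← (hclosed n).closure_eq, mem_closure_iff_nhds]
    intro U hU
    obtain ⟨m, hmU, hmn⟩ := ((hconv U hU).and (eventually_ge_atTop n)).exists
    obtain ⟨z, hz⟩ := hne m
    exact ⟨z, hmU hz, hanti hmn hz⟩
  rw [EMetric.tendsto_atTop]
  intro ε hε
  obtain ⟨k, hk⟩ := ENNReal.exists_inv_nat_lt hε.ne'
  -- Replacing `k` by `k + 1` makes the threshold an element of `oscValues`.
  have hkε : ((k + 1 : ℕ) : ℝ≥0∞)⁻¹ < ε :=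
    lt_of_le_of_lt (ENNReal.inv_le_inv.2 (by exact_mod_cast Nat.le_succ k)) hk
  have hkpos : (0 : ℝ≥0∞) < ((k + 1 : ℕ) : ℝ≥0∞)⁻¹ :=
    ENNReal.inv_pos.2 (ENNReal.natCast_ne_top _)
  obtain ⟨N, hN⟩ := (hosc.eventually (gt_mem_nhds hkpos)).exists
  have hlt : oscRestrict f (F N) x < ((k + 1 : ℕ) : ℝ≥0∞)⁻¹ := by
    by_contra! hle
    exact hN.not_ge (le_sSup ⟨Or.inr ⟨k + 1, k.succ_pos, rfl⟩, x, hx N, hle⟩)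
  simp only [oscRestrict, iInf_lt_iff] at hlt
  obtain ⟨U, ⟨hUo, hxU⟩, hdiam⟩ := hlt
  obtain ⟨M, hM⟩ := eventually_atTop.1
    ((hconv U (hUo.mem_nhds hxU)).and (eventually_ge_atTop N))
  obtain ⟨n₀, hn₀, hMn₀⟩ := hinf.exists_gt M
  have himg : ∀ n ≥ M, f '' F n ⊆ f '' (U ∩ F N) := fun n hn =>
    image_mono (subset_inter (hM n hn).1 (hanti (hM n hn).2))
  refine ⟨n₀, fun n hn => ?_⟩
  have hyn : y n ∈ f '' (U ∩ F N) := by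
    induction n, hn using Nat.le_induction with
    | base => exact himg n₀ hMn₀.le hn₀
    | succ n hn ih =>
      rcases hy n with h | h
      · exact himg (n + 1) (by omega) h
      · rwa [h]
  exact (Metric.edist_le_ediam_of_mem hyn (mem_image_of_mem f ⟨hxU, hx N⟩)).trans_lt
    (hdiam.trans hkε)
end

section
/- Let X and Y be Polish spaces and let f : X → Y be of Baire class 1. Then for every nonempty closed set F ⊆ X, the derived set D(F) is a closed proper subset of F, i.e., D(F) ⊊ F. -/
/-!
If `o_f(F) = 0` the derivative is empty. Otherwise it is `{x ∈ F | osc ≥ o_f(F)}`, which is closed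
because the oscillation is upper semicontinuous (`isClosed_setOf_le_oscRestrict`), and proper
because a Baire class 1 function has points of arbitrarily small oscillation on every nonempty
closed set (`exists_oscRestrict_lt`). Attainment of the maximum defining `o_f(F)` plays no role.
-/

open Filter Topology Set
open scoped ENNReal

/-- Upper semicontinuity of the oscillation: an open set witnessing `osc < r` at one of its points
witnesses it at all of them. -/
theorem isClosed_setOf_le_oscRestrict {X Y : Type*} [TopologicalSpace X] [PseudoEMetricSpace Y]
    (f : X → Y) (F : Set X) (r : ℝ≥0∞) : IsClosed {x | r ≤ oscRestrict f F x} := by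
  rw [← isOpen_compl_iff, isOpen_iff_mem_nhds]
  intro x hx
  simp only [mem_compl_iff, mem_ofPred_eq, not_le, oscRestrict, iInf_lt_iff] at hx
  obtain ⟨U, ⟨hU, hxU⟩, hlt⟩ := hx
  filter_upwards [hU.mem_nhds hxU] with y hy
  simp only [mem_compl_iff, mem_ofPred_eq, not_le]
  exact (iInf₂_le U ⟨hU, hy⟩).trans_lt hlt

/-- Baire category argument: countably many small balls cover `Y`, so `F` is a countable union
of closed sets on each of which `f` varies little, and one of them has interior in `F`. -/
theorem exists_oscRestrict_lt {X Y : Type*} [MetricSpace X] [CompleteSpace X]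
    [MetricSpace Y] [TopologicalSpace.SeparableSpace Y]
    {f : X → Y} (hf : BaireClassOne f) {F : Set X} (hF : IsClosed F) (hne : F.Nonempty)
    {r : ℝ≥0∞} (hr : 0 < r) : ∃ x ∈ F, oscRestrict f F x < r := by
  obtain ⟨c, hc0, hcr⟩ := exists_between hr
  have : Nonempty F := hne.to_subtype
  have : Nonempty Y := hne.to_type.map f
  have : CompleteSpace F := hF.completeSpace_coe
  let B : ℕ → Set Y := fun i => Metric.eball (TopologicalSpace.denseSeq Y i) (c / 2)
  choose C hC hCB using fun i => hf (B i) Metric.isOpen_eball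
  obtain ⟨⟨i, n⟩, x, hx⟩ := nonempty_interior_of_iUnion_of_closed
    (f := fun p : ℕ × ℕ => ((↑) : F → X) ⁻¹' C p.1 p.2)
    (fun p => (hC p.1 p.2).preimage continuous_subtype_val) (by
      refine eq_univ_of_forall fun x => ?_
      obtain ⟨i, hi⟩ := (TopologicalSpace.denseRange_denseSeq Y).exists_mem_open
        (Metric.isOpen_eball (x := f x) (ε := c / 2))
        ⟨f x, Metric.mem_eball_self (ENNReal.half_pos hc0.ne')⟩
      have hxB : (x : X) ∈ f ⁻¹' B i := Metric.mem_eball_comm.1 hi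
      rw [hCB i, mem_iUnion] at hxB
      obtain ⟨n, hn⟩ := hxB
      exact mem_iUnion.2 ⟨(i, n), hn⟩)
  obtain ⟨V, hVC, hV, hxV⟩ := mem_interior.1 hx
  obtain ⟨U, hU, rfl⟩ := isOpen_induced_iff.1 hV
  refine ⟨x, x.2, (iInf₂_le U ⟨hU, hxV⟩).trans_lt (lt_of_le_of_lt ?_ hcr)⟩
  have hsub : f '' (U ∩ F) ⊆ B i := by
    rintro _ ⟨y, ⟨hyU, hyF⟩, rfl⟩
    have hy : y ∈ C i n := hVC (show (⟨y, hyF⟩ : F) ∈ _ from hyU)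
    have : y ∈ f ⁻¹' B i := hCB i ▸ mem_iUnion.2 ⟨n, hy⟩
    exact this
  calc _ ≤ Metric.ediam (B i) := Metric.ediam_mono hsub
    _ ≤ 2 * (c / 2) := Metric.ediam_eball_le
    _ = c := ENNReal.mul_div_cancel two_ne_zero ENNReal.ofNat_ne_top

/-- If `f : X → Y` is of Baire class 1 between Polish spaces, then for every nonempty
closed set `F ⊆ X` the derived set `D(F)` is a closed proper subset of `F`. -/
theorem oscDeriv_ssubset_of_baireClassOne
    {X Y : Type*} [MetricSpace X] [CompleteSpace X] [TopologicalSpace.SeparableSpace X]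
    [MetricSpace Y] [CompleteSpace Y] [TopologicalSpace.SeparableSpace Y]
    (f : X → Y) (hf : BaireClassOne f)
    (F : Set X) (hF : IsClosed F) (hne : F.Nonempty) :
    IsClosed (oscDeriv f F) ∧ oscDeriv f F ⊂ F := by
  by_cases h0 : oscRank f F = 0
  · simp [oscDeriv, h0, empty_ssubset, hne]
  · rw [oscDeriv, if_neg h0]
    refine ⟨hF.inter (isClosed_setOf_le_oscRestrict f F _), sep_subset _ _, fun hsub => ?_⟩
    obtain ⟨x, hxF, hx⟩ := exists_oscRestrict_lt hf hF hne (pos_iff_ne_zero.2 h0)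
    exact hx.not_ge (hsub hxF).2
end

section
/- Let X and Y be Polish spaces and let f : X → Y be of Baire class 1. For a closed set F ⊆ X, define the transfinite iterates of the derivative by D^0(F) = F, D^{α+1}(F) = D(D^α(F)), and D^α(F) = ⋂_{β<α} D^β(F) for limit ordinals α. Then for every closed set F ⊆ X there exists a countable ordinal λ (i.e., λ < ω₁) such that D^λ(F) = ∅. -/
/-!
The derivative of a nonempty closed set `F` is a closed proper subset of `F`. Closedness is upper
semicontinuity of the oscillation (`isClosed_oscDeriv`). Properness is Baire's theorem: for `f` of
Baire class 1, the restriction of `f` to `F` has a point of continuity, where the oscillation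
vanishes and hence lies below a positive `oscRank` (`oscDeriv_ssubset`).

If all iterates below `ω₁` were nonempty, they would form a strictly decreasing `ω₁`-sequence of
closed sets. Picking for each `α < ω₁` a member of a fixed countable basis that meets `D^α(F)` but
misses `D^{α+1}(F)` would inject `ω₁` into a countable set.
-/

open Filter Topology Set
open scoped ENNReal

/-- The transfinite iterates of the derivative `D`: `D^0(F) = F`,
`D^{α+1}(F) = D(D^α(F))`, and `D^α(F) = ⋂_{β<α} D^β(F)` for limit `α`. -/
noncomputable def oscDerivIter {X Y : Type*} [TopologicalSpace X] [PseudoEMetricSpace Y]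
    (f : X → Y) (F : Set X) (α : Ordinal.{0}) : Set X :=
  Ordinal.limitRecOn α F (fun _ ih => oscDeriv f ih)
    (fun o _ ih => ⋂ (β : Ordinal.{0}) (h : β < o), ih β h)


/-- On a nonempty Baire space, a function for which preimages of open sets are Fσ has a point of
continuity: every discontinuity lies in the frontier of one of countably many closed sets. -/
lemma exists_continuousAt_of_isFsigma {Z Y : Type*} [TopologicalSpace Z] [BaireSpace Z] [Nonempty Z]
    [TopologicalSpace Y] [SecondCountableTopology Y] (g : Z → Y)
    (hg : ∀ U : Set Y, IsOpen U → IsFsigma (g ⁻¹' U)) : ∃ z, ContinuousAt g z := by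
  let B := TopologicalSpace.countableBasis Y
  have hB : TopologicalSpace.IsTopologicalBasis B := TopologicalSpace.isBasis_countableBasis Y
  have : Countable B := (TopologicalSpace.countable_countableBasis Y).to_subtype
  choose C hC hCU using fun V : B => hg V (hB.isOpen V.2)
  have hd : Dense (⋂ p : B × ℕ, (frontier (C p.1 p.2))ᶜ) := by
    refine dense_iInter_of_isOpen (fun p => isClosed_frontier.isOpen_compl) fun p => ?_
    exact interior_eq_empty_iff_dense_compl.1 (interior_frontier (hC p.1 p.2))
  obtain ⟨z, hz⟩ := hd.nonempty
  refine ⟨z, ?_⟩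
  rw [ContinuousAt, (hB.nhds_hasBasis).tendsto_right_iff]
  rintro V ⟨hV, hzV⟩
  have hz' : z ∈ g ⁻¹' V := hzV
  rw [hCU ⟨V, hV⟩] at hz'
  obtain ⟨k, hk⟩ := mem_iUnion.1 hz'
  have hzi : z ∈ interior (C ⟨V, hV⟩ k) := by
    by_contra h
    refine mem_iInter.1 hz (⟨V, hV⟩, k) ?_
    rw [(hC _ k).frontier_eq]
    exact ⟨hk, h⟩
  filter_upwards [mem_interior_iff_mem_nhds.1 hzi] with w hw
  have : w ∈ g ⁻¹' V := by
    rw [hCU ⟨V, hV⟩]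
    exact mem_iUnion.2 ⟨k, hw⟩
  exact this

lemma oscRestrict_eq_zero {X Y : Type*} [TopologicalSpace X] [PseudoEMetricSpace Y]
    (f : X → Y) (F : Set X) (x : F) (h : ContinuousAt (fun z : F => f z) x) :
    oscRestrict f F x = 0 := by
  by_contra hne
  obtain ⟨r, hr0, hr⟩ := exists_between (pos_iff_ne_zero.2 hne)
  have hr2 : 0 < r / 2 := ENNReal.half_pos hr0.ne'
  have hN := h (Metric.eball_mem_nhds (f x) hr2)
  rw [mem_map, nhds_subtype, mem_comap] at hN
  obtain ⟨t, ht, hts⟩ := hN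
  obtain ⟨U, hUt, hU, hxU⟩ := mem_nhds_iff.1 ht
  refine hr.not_ge ((iInf₂_le U ⟨hU, hxU⟩).trans (Metric.ediam_le ?_))
  rintro _ ⟨a, ⟨haU, haF⟩, rfl⟩ _ ⟨b, ⟨hbU, hbF⟩, rfl⟩
  have ha : edist (f a) (f x) < r / 2 := hts (show (⟨a, haF⟩ : F) ∈ Subtype.val ⁻¹' t from hUt haU)
  have hb : edist (f b) (f x) < r / 2 := hts (show (⟨b, hbF⟩ : F) ∈ Subtype.val ⁻¹' t from hUt hbU)
  calc edist (f a) (f b) ≤ edist (f a) (f x) + edist (f b) (f x) := edist_triangle_right _ _ _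
    _ ≤ r / 2 + r / 2 := add_le_add ha.le hb.le
    _ = r := ENNReal.add_halves r

lemma oscDeriv_subset {X Y : Type*} [TopologicalSpace X] [PseudoEMetricSpace Y]
    (f : X → Y) (F : Set X) : oscDeriv f F ⊆ F := by
  unfold oscDeriv
  split_ifs
  · exact empty_subset _
  · exact sep_subset _ _

lemma isClosed_oscDeriv {X Y : Type*} [TopologicalSpace X] [PseudoEMetricSpace Y]
    (f : X → Y) (F : Set X) (hF : IsClosed F) : IsClosed (oscDeriv f F) := by
  unfold oscDeriv
  split_ifs
  · exact isClosed_empty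
  · suffices h : IsOpen {x | oscRank f F ≤ oscRestrict f F x}ᶜ from
      hF.inter (isOpen_compl_iff.1 h)
    refine isOpen_iff_forall_mem_open.2 fun x hx => ?_
    have hx' : oscRestrict f F x < oscRank f F := not_le.1 hx
    obtain ⟨U, hU, hlt⟩ := by simpa only [oscRestrict, iInf_lt_iff] using hx'
    -- A witness `U` for small oscillation at `x` is one at each of its points.
    refine ⟨U, fun y hy => ?_, hU.1, hU.2⟩
    have hy' : oscRestrict f F y < oscRank f F :=
      (iInf₂_le U (And.intro hU.1 hy)).trans_lt hlt
    exact hy'.not_ge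

lemma oscDeriv_ssubset {X Y : Type*} [MetricSpace X] [CompleteSpace X]
    [MetricSpace Y] [TopologicalSpace.SeparableSpace Y]
    (f : X → Y) (hf : BaireClassOne f) (F : Set X) (hF : IsClosed F) (hne : F.Nonempty) :
    ∃ x ∈ F, x ∉ oscDeriv f F := by
  have : SecondCountableTopology Y := UniformSpace.secondCountable_of_separable Y
  have : CompleteSpace F := hF.completeSpace_coe
  have : Nonempty F := hne.to_subtype
  obtain ⟨x, hx⟩ := exists_continuousAt_of_isFsigma (fun z : F => f z) fun U hU => by
    obtain ⟨C, hC, h⟩ := hf U hU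
    refine ⟨fun n => Subtype.val ⁻¹' C n, fun n => (hC n).preimage continuous_subtype_val, ?_⟩
    rw [← preimage_iUnion, ← h]
    rfl
  refine ⟨x, x.2, fun hD => ?_⟩
  unfold oscDeriv at hD
  split_ifs at hD with h0
  · exact hD
  · exact h0 (le_zero_iff.1 (hD.2.trans_eq (oscRestrict_eq_zero f F x hx)))

section Iter

variable {X Y : Type*} [TopologicalSpace X] [PseudoEMetricSpace Y] (f : X → Y) (F : Set X)

lemma oscDerivIter_zero : oscDerivIter f F 0 = F :=
  Ordinal.limitRecOn_zero ..

lemma oscDerivIter_add_one (α : Ordinal.{0}) :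
    oscDerivIter f F (α + 1) = oscDeriv f (oscDerivIter f F α) :=
  Ordinal.limitRecOn_add_one ..

lemma oscDerivIter_limit {α : Ordinal.{0}} (h : Order.IsSuccLimit α) :
    oscDerivIter f F α = ⋂ (β : Ordinal.{0}) (_ : β < α), oscDerivIter f F β :=
  Ordinal.limitRecOn_limit _ _ _ _ h

lemma antitone_oscDerivIter : Antitone (oscDerivIter f F) := by
  intro β α
  induction α using Ordinal.limitRecOn with
  | zero => intro h; rw [le_zero_iff.1 h]
  | add_one α ih =>
    intro h
    rcases h.eq_or_lt with rfl | h
    · rfl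
    · rw [oscDerivIter_add_one]
      exact (oscDeriv_subset _ _).trans (ih (Order.lt_add_one_iff.1 h))
  | limit α hα ih =>
    intro h
    rcases h.eq_or_lt with rfl | h
    · rfl
    · rw [oscDerivIter_limit f F hα]
      exact iInter₂_subset β h

lemma isClosed_oscDerivIter (hF : IsClosed F) (α : Ordinal.{0}) :
    IsClosed (oscDerivIter f F α) := by
  induction α using Ordinal.limitRecOn with
  | zero => rwa [oscDerivIter_zero]
  | add_one α ih =>
    rw [oscDerivIter_add_one]
    exact isClosed_oscDeriv _ _ ih
  | limit α hα ih =>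
    rw [oscDerivIter_limit f F hα]
    exact isClosed_iInter fun β => isClosed_iInter fun h => ih β h

end Iter

/-- If `f : X → Y` is of Baire class 1 between Polish spaces, then for every closed set
`F ⊆ X` there is a countable ordinal `λ < ω₁` with `D^λ(F) = ∅`. -/
theorem exists_countable_ordinal_oscDerivIter_empty
    {X Y : Type*} [MetricSpace X] [CompleteSpace X] [TopologicalSpace.SeparableSpace X]
    [MetricSpace Y] [CompleteSpace Y] [TopologicalSpace.SeparableSpace Y]
    (f : X → Y) (hf : BaireClassOne f) (F : Set X) (hF : IsClosed F) :
    ∃ lam : Ordinal.{0}, lam < (Cardinal.aleph 1).ord ∧ oscDerivIter f F lam = ∅ := by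
  have : SecondCountableTopology X := UniformSpace.secondCountable_of_separable X
  by_contra! hne
  let B := TopologicalSpace.countableBasis X
  have hB : TopologicalSpace.IsTopologicalBasis B := TopologicalSpace.isBasis_countableBasis X
  have : Countable B := (TopologicalSpace.countable_countableBasis X).to_subtype
  have key : ∀ α : Iio (Cardinal.aleph 1).ord, ∃ V : B,
      (V.1 ∩ oscDerivIter f F α).Nonempty ∧ Disjoint V.1 (oscDerivIter f F (α + 1)) := by
    rintro ⟨α, hα⟩
    obtain ⟨x, hx, hxD⟩ := oscDeriv_ssubset f hf _ (isClosed_oscDerivIter f F hF α) (hne α hα)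
    rw [← oscDerivIter_add_one] at hxD
    obtain ⟨V, hV, hxV, hVs⟩ := hB.exists_subset_of_mem_open (mem_compl hxD)
      (isClosed_oscDerivIter f F hF (α + 1)).isOpen_compl
    exact ⟨⟨V, hV⟩, ⟨x, hxV, hx⟩, disjoint_left.2 hVs⟩
  choose V hV1 hV2 using key
  have hlt : ∀ α β, α < β → V α ≠ V β := by
    intro α β h he
    obtain ⟨x, hxV, hx⟩ := hV1 β
    rw [← he] at hxV
    exact disjoint_left.1 (hV2 α) hxV
      (antitone_oscDerivIter f F (Order.add_one_le_of_lt (Subtype.coe_lt_coe.2 h)) hx)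
  have hinj : Function.Injective V := fun α β he => by
    rcases lt_trichotomy α β with h | h | h
    · exact (hlt α β h he).elim
    · exact h
    · exact (hlt β α h he.symm).elim
  have hc := Cardinal.mk_le_aleph0_iff.2 hinj.countable
  rw [Cardinal.mk_Iio_ordinal, Cardinal.card_ord, Cardinal.lift_le_aleph0] at hc
  exact hc.not_gt Cardinal.aleph0_lt_aleph_one
end

section
/- Let (γ_n)_{n∈ℕ} be a sequence of ordinals and let γ = min{ η : the set {n ∈ ℕ : γ_n ≤ η} is infinite } (this minimum exists). Suppose γ_n < γ for infinitely many n. Then there exists a strictly increasing sequence (n_k)_{k∈ℕ} of natural numbers such that the sequence (γ_{n_k})_{k∈ℕ} is strictly increasing with supremum γ, and for every k and every n > n_k one has γ_n > γ_{n_k}. -/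
/-!
Call an index `n` *good* if `γ_n < γ` and `γ_n < γ_m` for all `m > n`. By minimality of `γ`, the set
`{m : γ_m ≤ η}` is finite for every `η < γ`. So if `γ_a < γ`, the largest `m` with `γ_m ≤ γ_a` exists;
it is good and at least `a`. Since such `a` are unbounded, so are the good indices, and the sequence
enumerates some of them. Its values increase below `γ`, and their supremum `σ` cannot be less than
`γ`, because `{m : γ_m ≤ σ}` is infinite.
-/

/-- Let `(γ_n)` be a sequence of ordinals and let `γ` be the least ordinal `η` such that
`{n : γ_n ≤ η}` is infinite (this minimum exists). If `γ_n < γ` for infinitely many `n`,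
then there is a strictly increasing sequence `(n_k)` such that `(γ_{n_k})` is strictly
increasing with supremum `γ`, and `γ_n > γ_{n_k}` for every `n > n_k`. -/
theorem exists_strictMono_subsequence_of_ordinals (γs : ℕ → Ordinal) (γ : Ordinal)
    (hγ : γ = sInf {η : Ordinal | {n : ℕ | γs n ≤ η}.Infinite})
    (hinf : {n : ℕ | γs n < γ}.Infinite) :
    ∃ nk : ℕ → ℕ, StrictMono nk ∧ StrictMono (fun k => γs (nk k)) ∧
      (⨆ k : ℕ, γs (nk k)) = γ ∧ ∀ k : ℕ, ∀ n : ℕ, nk k < n → γs (nk k) < γs n := by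
  have hfin : ∀ η < γ, {n : ℕ | γs n ≤ η}.Finite := fun η hη => by
    by_contra h
    exact (notMem_of_lt_csInf' (hγ ▸ hη)) h
  have hgood : ∀ N : ℕ, ∃ n > N, γs n < γ ∧ ∀ m, n < m → γs n < γs m := fun N => by
    obtain ⟨a, ha, hNa⟩ := hinf.exists_gt N
    obtain ⟨n, hn, hmax⟩ :=
      Set.exists_max_image _ id (hfin (γs a) ha) ⟨a, le_refl (γs a)⟩
    refine ⟨n, hNa.trans_le (hmax a (le_refl (γs a))), lt_of_le_of_lt hn ha, fun m hm => ?_⟩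
    by_contra! h
    exact absurd (hmax m (h.trans hn)) (not_le.mpr hm)
  obtain ⟨nk, hmono, hnk⟩ := Filter.extraction_of_frequently_atTop
    (Filter.frequently_atTop'.2 hgood)
  refine ⟨nk, hmono, fun i j hij => (hnk i).2 _ (hmono hij), ?_, fun k => (hnk k).2⟩
  refine le_antisymm (ciSup_le' fun k => (hnk k).1.le) ?_
  by_contra! h
  have hbdd : BddAbove (Set.range fun k => γs (nk k)) :=
    ⟨γ, by rintro _ ⟨k, rfl⟩; exact (hnk k).1.le⟩
  exact Set.infinite_of_injective_forall_mem hmono.injective (fun k => le_ciSup hbdd k) (hfin _ h)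
end
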